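/- Let μ be a nonzero finite positive measure on [0,∞), μ({0}) = 0, and α, λ > 0. Define the spectral density ρ(ω) = (1/π) · λ² K_cos(ω) / (α² K_cos(ω)² + (ω − α K_sin(ω))²) for ω ≠ 0, where K_cos(ω) = ∫₀^∞ x/(x²+ω²) dμ(x) and K_sin(ω) = ∫₀^∞ ω/(x²+ω²) dμ(x). Then ρ is integrable on ℝ and ∫_ℝ ρ(ω) dω = λ²/α. -/

import Mathlib

open MeasureTheory Set

/-!
Write `S(w) = α ∫ (w + x)⁻¹ dμ(x)` and `F(w) = (S(w) + w)⁻¹` for `Re w ≥ 0`, `w ≠ 0`. On the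
imaginary axis `ρ(ω) = λ² / (α π) · Re F(iω)`, so the claim is `∫ Re F(iω) dω = π`. Since
`(w + 1)⁻¹` has the same leading behaviour `w⁻¹` at infinity as `F` and
`∫ Re (iω + 1)⁻¹ dω = ∫ (1 + ω²)⁻¹ dω = π`, it suffices that the difference `F(w) - (w + 1)⁻¹`
integrates to `0` over the imaginary axis. It is holomorphic for `Re w > 0`, where it is
`O((1 + |w|²)⁻¹)`: at infinity because `S` is bounded there, near `0` because `Re S` is bounded
below. Cauchy's theorem then annihilates its integral over every line `Re w = ε > 0`, and `ε → 0`
is a passage under the integral sign.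
-/

open Filter Topology

section ContourShift

variable {E : Type*} [NormedAddCommGroup E] {f : ℂ → E} {a C : ℝ}

lemma nonneg_of_norm_le_mul_inv (hbound : ∀ w, a ≤ w.re → ‖f w‖ ≤ C * (1 + ‖w‖ ^ 2)⁻¹) :
    0 ≤ C :=
  nonneg_of_mul_nonneg_left ((norm_nonneg _).trans (hbound a le_rfl)) (by positivity)

lemma norm_apply_le_of_le_norm (hbound : ∀ w, a ≤ w.re → ‖f w‖ ≤ C * (1 + ‖w‖ ^ 2)⁻¹)
    {w : ℂ} (hw : a ≤ w.re) {T : ℝ} (hT : |T| ≤ ‖w‖) : ‖f w‖ ≤ C * (1 + T ^ 2)⁻¹ := by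
  have hC : 0 ≤ C := nonneg_of_norm_le_mul_inv hbound
  have hsq : T ^ 2 ≤ ‖w‖ ^ 2 := sq_le_sq.2 (by rwa [abs_norm])
  exact (hbound w hw).trans (by gcongr)

lemma norm_apply_add_mul_I_le (hbound : ∀ w, a ≤ w.re → ‖f w‖ ≤ C * (1 + ‖w‖ ^ 2)⁻¹)
    {x : ℝ} (hx : a ≤ x) (t : ℝ) : ‖f (x + t * Complex.I)‖ ≤ C * (1 + t ^ 2)⁻¹ :=
  norm_apply_le_of_le_norm hbound (by simpa using hx)
    (by simpa using Complex.abs_im_le_norm (x + t * Complex.I))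

variable [NormedSpace ℂ E]

lemma continuous_apply_add_mul_I (hf : DifferentiableOn ℂ f {w | a ≤ w.re}) :
    Continuous fun t : ℝ => f (a + t * Complex.I) :=
  hf.continuousOn.comp_continuous (by fun_prop) fun t => by simp

lemma integrable_add_mul_I (hf : DifferentiableOn ℂ f {w | a ≤ w.re})
    (hbound : ∀ w, a ≤ w.re → ‖f w‖ ≤ C * (1 + ‖w‖ ^ 2)⁻¹) :
    Integrable fun t : ℝ => f (a + t * Complex.I) :=
  (integrable_inv_one_add_sq.const_mul C).mono'
    (continuous_apply_add_mul_I hf).aestronglyMeasurable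
    (.of_forall (norm_apply_add_mul_I_le hbound le_rfl))

lemma norm_integral_horizontal_le (hbound : ∀ w, a ≤ w.re → ‖f w‖ ≤ C * (1 + ‖w‖ ^ 2)⁻¹)
    {T : ℝ} (haT : a ≤ T) (t : ℝ) :
    ‖∫ x in a..T, f (x + t * Complex.I)‖ ≤ C * (1 + t ^ 2)⁻¹ * (T - a) := by
  rw [← abs_of_nonneg (sub_nonneg.2 haT)]
  refine intervalIntegral.norm_integral_le_of_norm_le_const fun x hx => ?_
  rw [uIoc_of_le haT] at hx
  exact norm_apply_add_mul_I_le hbound hx.1.le t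

lemma norm_integral_vertical_le (hbound : ∀ w, a ≤ w.re → ‖f w‖ ≤ C * (1 + ‖w‖ ^ 2)⁻¹)
    {T : ℝ} (haT : a ≤ T) (hT : 0 ≤ T) :
    ‖∫ t in -T..T, f (T + t * Complex.I)‖ ≤ C * (1 + T ^ 2)⁻¹ * (2 * T) := by
  rw [← abs_of_nonneg (by positivity : 0 ≤ 2 * T), show 2 * T = T - -T by ring]
  exact intervalIntegral.norm_integral_le_of_norm_le_const fun t _ =>
    norm_apply_le_of_le_norm hbound (by simpa using haT)
      (by simpa using Complex.abs_re_le_norm (T + t * Complex.I))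

lemma norm_intervalIntegral_add_mul_I_le (hf : DifferentiableOn ℂ f {w | a ≤ w.re})
    (hbound : ∀ w, a ≤ w.re → ‖f w‖ ≤ C * (1 + ‖w‖ ^ 2)⁻¹) {T : ℝ} (hT : |a| ≤ T) :
    ‖∫ t in -T..T, f (a + t * Complex.I)‖ ≤ C * (1 + T ^ 2)⁻¹ * (6 * T) := by
  have hC : 0 ≤ C := nonneg_of_norm_le_mul_inv hbound
  have haT : a ≤ T := (le_abs_self a).trans hT
  have hcauchy := Complex.integral_boundary_rect_eq_zero_of_differentiableOn f
    ⟨a, -T⟩ ⟨T, T⟩ (hf.mono fun w hw => by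
      rw [Complex.mem_reProdIm, uIcc_of_le haT] at hw
      exact hw.1.1)
  rw [sub_eq_zero] at hcauchy
  calc ‖∫ t in -T..T, f (a + t * Complex.I)‖
      = ‖Complex.I • ∫ t in -T..T, f (a + t * Complex.I)‖ := by simp [norm_smul]
    _ ≤ ‖∫ x in a..T, f (x + (-T : ℝ) * Complex.I)‖ + ‖∫ x in a..T, f (x + T * Complex.I)‖
          + ‖∫ t in -T..T, f (T + t * Complex.I)‖ := by
        rw [← hcauchy]
        refine (norm_add_le _ _).trans (add_le_add (norm_sub_le _ _) ?_)
        simp [norm_smul]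
    _ ≤ C * (1 + T ^ 2)⁻¹ * (T - a) + C * (1 + T ^ 2)⁻¹ * (T - a)
          + C * (1 + T ^ 2)⁻¹ * (2 * T) := by
        gcongr
        · simpa using norm_integral_horizontal_le hbound haT (-T)
        · exact norm_integral_horizontal_le hbound haT T
        · exact norm_integral_vertical_le hbound haT ((abs_nonneg a).trans hT)
    _ = C * (1 + T ^ 2)⁻¹ * (4 * T - 2 * a) := by ring
    _ ≤ C * (1 + T ^ 2)⁻¹ * (6 * T) := by
        gcongr
        linarith [neg_abs_le a]

theorem integral_add_mul_I_eq_zero (hf : DifferentiableOn ℂ f {w | a ≤ w.re})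
    (hbound : ∀ w, a ≤ w.re → ‖f w‖ ≤ C * (1 + ‖w‖ ^ 2)⁻¹) :
    ∫ t : ℝ, f (a + t * Complex.I) = 0 := by
  have hC : 0 ≤ C := nonneg_of_norm_le_mul_inv hbound
  refine tendsto_nhds_unique (intervalIntegral_tendsto_integral (integrable_add_mul_I hf hbound)
    tendsto_neg_atTop_atBot tendsto_id) ?_
  have hlim : Tendsto (fun T : ℝ => 6 * C * T⁻¹) atTop (𝓝 0) := by
    simpa using tendsto_inv_atTop_zero.const_mul (6 * C)
  refine squeeze_zero_norm' ?_ hlim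
  filter_upwards [eventually_ge_atTop |a|, eventually_gt_atTop 0] with T hT hT0
  calc ‖∫ t in -T..T, f (a + t * Complex.I)‖
      ≤ C * (1 + T ^ 2)⁻¹ * (6 * T) := norm_intervalIntegral_add_mul_I_le hf hbound hT
    _ ≤ C * (T ^ 2)⁻¹ * (6 * T) := by gcongr; linarith
    _ = 6 * C * T⁻¹ := by field_simp

theorem integrable_and_integral_eq_zero_of_tendsto_add_mul_I {g : ℝ → E}
    (hf : DifferentiableOn ℂ f {w | 0 < w.re})
    (hbound : ∀ w, 0 < w.re → ‖f w‖ ≤ C * (1 + ‖w‖ ^ 2)⁻¹)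
    (hlim : ∀ᵐ t : ℝ, Tendsto (fun ε : ℝ => f (ε + t * Complex.I)) (𝓝[>] 0) (𝓝 (g t))) :
    Integrable g ∧ ∫ t, g t = 0 := by
  obtain ⟨ε, -, hε, hε0⟩ := exists_seq_strictAnti_tendsto_nhdsWithin (0 : ℝ)
  have hf' n : DifferentiableOn ℂ f {w | ε n ≤ w.re} := hf.mono fun w hw => (hε n).trans_le hw
  have hbound' n w (hw : ε n ≤ w.re) := hbound w ((hε n).trans_le hw)
  have hmeas n : AEStronglyMeasurable fun t : ℝ => f (ε n + t * Complex.I) :=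
    (continuous_apply_add_mul_I (hf' n)).aestronglyMeasurable
  have hdom : Integrable fun t : ℝ => C * (1 + t ^ 2)⁻¹ := integrable_inv_one_add_sq.const_mul C
  have hle n : ∀ᵐ t : ℝ, ‖f (ε n + t * Complex.I)‖ ≤ C * (1 + t ^ 2)⁻¹ :=
    .of_forall (norm_apply_add_mul_I_le (hbound' n) le_rfl)
  have htend : ∀ᵐ t : ℝ, Tendsto (fun n => f (ε n + t * Complex.I)) atTop (𝓝 (g t)) :=
    hlim.mono fun t ht => ht.comp hε0
  refine ⟨⟨aestronglyMeasurable_of_tendsto_ae atTop hmeas htend,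
    hasFiniteIntegral_of_dominated_convergence hdom.2 hle htend⟩,
    tendsto_nhds_unique (tendsto_integral_of_dominated_convergence _ hmeas hdom hle htend) ?_⟩
  simp only [integral_add_mul_I_eq_zero (hf' _) (hbound' _), tendsto_const_nhds]

end ContourShift

section StieltjesTransform

/-- The Stieltjes transform `w ↦ ∫ (w + x)⁻¹ dν(x)`, which for `Re w > 0` and `ν` carried by
`[0, ∞)` is the Laplace transform of the completely monotone kernel `t ↦ ∫ exp (-t x) dν(x)`.
In the sign convention of `MeasureTheory.resolventTransform` it is evaluated at `-w`. -/
noncomputable def stieltjesTransform (ν : Measure ℝ) (w : ℂ) : ℂ := ∫ x : ℝ, (w + x)⁻¹ ∂ν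

/-- The measures on `[0, ∞)` whose Stieltjes transform converges off `(-∞, 0]`. They may be
infinite, as for the fractional kernels `t ^ (-β)` with `0 < β < 1`. -/
structure HasStieltjesTransform (ν : Measure ℝ) : Prop where
  ae_nonneg : ∀ᵐ x ∂ν, 0 ≤ x
  integrable_inv_one_add : Integrable (fun x => (1 + x)⁻¹) ν

lemma norm_le_norm_add_ofReal {w : ℂ} (hw : 0 ≤ w.re) {x : ℝ} (hx : 0 ≤ x) : ‖w‖ ≤ ‖w + x‖ := by
  rw [← sq_le_sq₀ (norm_nonneg _) (norm_nonneg _), Complex.sq_norm, Complex.sq_norm,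
    Complex.normSq_apply, Complex.normSq_apply]
  simp only [Complex.add_re, Complex.add_im, Complex.ofReal_re, Complex.ofReal_im]
  nlinarith

lemma le_norm_add_ofReal {w : ℂ} (hw : 0 ≤ w.re) (x : ℝ) : x ≤ ‖w + x‖ :=
  calc x ≤ (w + x).re := by simpa using hw
    _ ≤ ‖w + x‖ := Complex.re_le_norm _

lemma norm_add_le_two_mul_norm_add_ofReal {w : ℂ} (hw : 0 ≤ w.re) {x : ℝ} (hx : 0 ≤ x) :
    ‖w‖ + x ≤ 2 * ‖w + x‖ := by
  linarith [norm_le_norm_add_ofReal hw hx, le_norm_add_ofReal hw x]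

lemma norm_inv_add_ofReal_le {w : ℂ} (hw : 0 ≤ w.re) {a : ℝ} (ha : 0 < a) (haw : a ≤ ‖w‖)
    {x : ℝ} (hx : 0 ≤ x) : ‖(w + x)⁻¹‖ ≤ 2 * (a + x)⁻¹ := by
  have hle : (a + x) / 2 ≤ ‖w + x‖ := by
    linarith [norm_add_le_two_mul_norm_add_ofReal hw hx]
  calc ‖(w + x)⁻¹‖ ≤ ((a + x) / 2)⁻¹ := by rw [norm_inv]; gcongr
    _ = 2 * (a + x)⁻¹ := by rw [inv_div, div_eq_mul_inv]

lemma aestronglyMeasurable_inv_add_ofReal (ν : Measure ℝ) (w : ℂ) :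
    AEStronglyMeasurable (fun x : ℝ => (w + x)⁻¹) ν :=
  (by fun_prop : Measurable fun x : ℝ => (w + x)⁻¹).aestronglyMeasurable

namespace HasStieltjesTransform

variable {ν : Measure ℝ} {w : ℂ}

lemma smul (h : HasStieltjesTransform ν) {c : ENNReal} (hc : c ≠ ⊤) :
    HasStieltjesTransform (c • ν) :=
  ⟨Measure.ae_smul_measure h.ae_nonneg c, h.integrable_inv_one_add.smul_measure hc⟩

lemma integrable_inv_add (h : HasStieltjesTransform ν) {a : ℝ} (ha : 0 < a) :
    Integrable (fun x => (a + x)⁻¹) ν := by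
  refine (h.integrable_inv_one_add.const_mul (1 + a⁻¹)).mono'
    (by fun_prop : Measurable fun x : ℝ => (a + x)⁻¹).aestronglyMeasurable ?_
  filter_upwards [h.ae_nonneg] with x hx
  rw [Real.norm_of_nonneg (by positivity), ← div_eq_mul_inv, inv_eq_one_div,
    div_le_div_iff₀ (by positivity) (by positivity)]
  field_simp
  nlinarith

lemma integrable_inv_add_ofReal (h : HasStieltjesTransform ν) (hw : 0 ≤ w.re) (hw0 : w ≠ 0) :
    Integrable (fun x : ℝ => (w + x)⁻¹) ν := by
  refine ((h.integrable_inv_add (norm_pos_iff.2 hw0)).const_mul 2).mono'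
    (aestronglyMeasurable_inv_add_ofReal ν w) ?_
  filter_upwards [h.ae_nonneg] with x hx
  exact norm_inv_add_ofReal_le hw (norm_pos_iff.2 hw0) le_rfl hx

lemma norm_stieltjesTransform_le (h : HasStieltjesTransform ν) (hw : 0 ≤ w.re) {a : ℝ}
    (ha : 0 < a) (haw : a ≤ ‖w‖) : ‖stieltjesTransform ν w‖ ≤ 2 * ∫ x, (a + x)⁻¹ ∂ν := by
  rw [← integral_const_mul]
  refine norm_integral_le_of_norm_le ((h.integrable_inv_add ha).const_mul 2) ?_
  filter_upwards [h.ae_nonneg] with x hx using norm_inv_add_ofReal_le hw ha haw hx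

lemma differentiableAt_stieltjesTransform (h : HasStieltjesTransform ν) (hw : 0 ≤ w.re)
    (hw0 : w ≠ 0) : DifferentiableAt ℂ (stieltjesTransform ν) w := by
  have hpos : 0 < ‖w‖ := norm_pos_iff.2 hw0
  have hlower : ∀ x : ℝ, 0 ≤ x → ∀ z ∈ Metric.ball w (‖w‖ / 4), (‖w‖ + x) / 4 ≤ ‖z + x‖ := by
    intro x hx z hz
    rw [mem_ball_iff_norm'] at hz
    have htri : ‖w + x‖ ≤ ‖w - z‖ + ‖z + x‖ := by
      simpa only [← add_assoc, sub_add_cancel] using norm_add_le (w - z) (z + x)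
    linarith [norm_add_le_two_mul_norm_add_ofReal hw hx]
  refine (hasDerivAt_integral_of_dominated_loc_of_deriv_le (𝕜 := ℂ)
    (F := fun (z : ℂ) (x : ℝ) => (z + x)⁻¹) (F' := fun z x => -1 / (z + x) ^ 2)
    (s := Metric.ball w (‖w‖ / 4))
    (bound := fun x => 16 * ‖w‖⁻¹ * (‖w‖ + x)⁻¹) (Metric.ball_mem_nhds w (by positivity))
    (.of_forall (aestronglyMeasurable_inv_add_ofReal ν)) (h.integrable_inv_add_ofReal hw hw0)
    (by fun_prop : Measurable fun x : ℝ => -1 / (w + x) ^ 2).aestronglyMeasurable ?_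
    ((h.integrable_inv_add hpos).const_mul _) ?_).2.differentiableAt
  · filter_upwards [h.ae_nonneg] with x hx z hz
    calc ‖-1 / (z + x) ^ 2‖ = 1 / ‖z + x‖ ^ 2 := by simp
      _ ≤ 1 / ((‖w‖ + x) / 4) ^ 2 := by gcongr; exact hlower x hx z hz
      _ = 16 * (‖w‖ + x)⁻¹ * (‖w‖ + x)⁻¹ := by field_simp; norm_num
      _ ≤ 16 * ‖w‖⁻¹ * (‖w‖ + x)⁻¹ := by gcongr; linarith
  · filter_upwards [h.ae_nonneg] with x hx z hz
    have hne : z + (x : ℂ) ≠ 0 :=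
      norm_pos_iff.1 (lt_of_lt_of_le (by positivity) (hlower x hx z hz))
    exact ((hasDerivAt_id z).add_const (x : ℂ)).fun_inv hne

lemma integrable_div_sq (h : HasStieltjesTransform ν) {R : ℝ} (hR : 0 < R) :
    Integrable (fun x => x / (R + x) ^ 2) ν := by
  refine (h.integrable_inv_add hR).mono'
    (by fun_prop : Measurable fun x : ℝ => x / (R + x) ^ 2).aestronglyMeasurable ?_
  filter_upwards [h.ae_nonneg] with x hx
  rw [Real.norm_of_nonneg (by positivity), inv_eq_one_div,
    div_le_div_iff₀ (by positivity) (by positivity)]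
  nlinarith

lemma integral_div_sq_pos (h : HasStieltjesTransform ν) (hν : ν (Ioi 0) ≠ 0) {R : ℝ}
    (hR : 0 < R) : 0 < ∫ x, x / (R + x) ^ 2 ∂ν := by
  have hnonneg : 0 ≤ᵐ[ν] fun x => x / (R + x) ^ 2 := by
    filter_upwards [h.ae_nonneg] with x hx using by positivity
  rw [integral_pos_iff_support_of_nonneg_ae hnonneg (h.integrable_div_sq hR)]
  refine (pos_iff_ne_zero.2 hν).trans_le (measure_mono fun x (hx : 0 < x) => ?_)
  rw [Function.mem_support]
  positivity

lemma integral_div_sq_le_re_stieltjesTransform (h : HasStieltjesTransform ν) (hw : 0 ≤ w.re)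
    (hw0 : w ≠ 0) {R : ℝ} (hwR : ‖w‖ ≤ R) :
    ∫ x, x / (R + x) ^ 2 ∂ν ≤ (stieltjesTransform ν w).re := by
  have hpos : 0 < ‖w‖ := norm_pos_iff.2 hw0
  have hint := h.integrable_inv_add_ofReal hw hw0
  refine le_of_le_of_eq (integral_mono_ae (h.integrable_div_sq (hpos.trans_le hwR)) hint.re ?_)
    (integral_re hint)
  filter_upwards [h.ae_nonneg] with x hx
  have hlower : 0 < ‖w + x‖ := by linarith [norm_add_le_two_mul_norm_add_ofReal hw hx]
  have hupper : ‖w + x‖ ≤ R + x := by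
    calc ‖w + x‖ ≤ ‖w‖ + ‖(x : ℂ)‖ := norm_add_le _ _
      _ ≤ R + x := by rw [Complex.norm_of_nonneg hx]; gcongr
  calc x / (R + x) ^ 2 ≤ (w.re + x) / ‖w + x‖ ^ 2 := by gcongr; linarith
    _ = ((w + x)⁻¹).re := by simp [Complex.inv_re, Complex.normSq_eq_norm_sq]

lemma stieltjesTransform_mul_I (h : HasStieltjesTransform ν) {t : ℝ} (ht : t ≠ 0) :
    stieltjesTransform ν (t * Complex.I) =
      ⟨∫ x, x / (x ^ 2 + t ^ 2) ∂ν, -∫ x, t / (x ^ 2 + t ^ 2) ∂ν⟩ := by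
  have hint := h.integrable_inv_add_ofReal (w := t * Complex.I) (by simp) (by simpa using ht)
  have hinv (x : ℝ) : (t * Complex.I + x : ℂ)⁻¹ =
      ⟨x / (x ^ 2 + t ^ 2), -(t / (x ^ 2 + t ^ 2))⟩ := by
    apply Complex.ext <;> simp [Complex.inv_re, Complex.inv_im, Complex.normSq_apply, sq, neg_div]
  apply Complex.ext
  · exact (integral_re hint).symm.trans (by simp [hinv])
  · exact (integral_im hint).symm.trans (by simp [hinv, integral_neg])

end HasStieltjesTransform

end StieltjesTransform

section RelaxationTransform

/-- With `S` the Laplace transform of a kernel `K`, the function `w ↦ (S(w) + w)⁻¹` is the Laplace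
transform of the solution of the relaxation equation `y' = -K ∗ y`, `y(0) = 1`. Here `S` is the
Stieltjes transform of `ν`, so that a coupling constant in front of `K` is absorbed in `ν`. -/
noncomputable def relaxationTransform (ν : Measure ℝ) (w : ℂ) : ℂ := (stieltjesTransform ν w + w)⁻¹

lemma one_le_norm_add_one {w : ℂ} (hw : 0 ≤ w.re) : 1 ≤ ‖w + 1‖ := by
  simpa using le_norm_add_ofReal hw 1

lemma norm_relaxationTransform_sub_le_of_le_norm {ν : Measure ℝ} {w : ℂ} (hw : 0 ≤ w.re)
    (hw0 : w ≠ 0) {M : ℝ} (hS : ‖stieltjesTransform ν w‖ ≤ M) (hM : 2 * M ≤ ‖w‖) :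
    ‖relaxationTransform ν w - (w + 1)⁻¹‖ ≤ 2 * (1 + M) / ‖w‖ ^ 2 := by
  have hpos : 0 < ‖w‖ := norm_pos_iff.2 hw0
  have hden : ‖w‖ / 2 ≤ ‖stieltjesTransform ν w + w‖ := by
    linarith [norm_le_add_norm_add' (stieltjesTransform ν w) w]
  have hden0 : stieltjesTransform ν w + w ≠ 0 := norm_pos_iff.1 ((half_pos hpos).trans_le hden)
  have hone0 : w + 1 ≠ 0 := norm_pos_iff.1 (one_pos.trans_le (one_le_norm_add_one hw))
  have hnum : ‖1 - stieltjesTransform ν w‖ ≤ 1 + M :=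
    (norm_sub_le _ _).trans (by rw [norm_one]; gcongr)
  have hdiff : relaxationTransform ν w - (w + 1)⁻¹ =
      (1 - stieltjesTransform ν w) / ((stieltjesTransform ν w + w) * (w + 1)) := by
    rw [relaxationTransform, inv_sub_inv hden0 hone0]
    ring
  calc ‖relaxationTransform ν w - (w + 1)⁻¹‖
      = ‖1 - stieltjesTransform ν w‖ / (‖stieltjesTransform ν w + w‖ * ‖w + 1‖) := by
        rw [hdiff, norm_div, norm_mul]
    _ ≤ (1 + M) / (‖w‖ / 2 * ‖w‖) := by
        gcongr
        · exact (norm_nonneg _).trans hnum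
        · exact by simpa using norm_le_norm_add_ofReal hw zero_le_one
    _ = 2 * (1 + M) / ‖w‖ ^ 2 := by field_simp

namespace HasStieltjesTransform

variable {ν : Measure ℝ} {w : ℂ}

lemma integral_div_sq_le_norm_stieltjesTransform_add (h : HasStieltjesTransform ν)
    (hw : 0 ≤ w.re) (hw0 : w ≠ 0) {R : ℝ} (hwR : ‖w‖ ≤ R) :
    ∫ x, x / (R + x) ^ 2 ∂ν ≤ ‖stieltjesTransform ν w + w‖ :=
  calc ∫ x, x / (R + x) ^ 2 ∂ν ≤ (stieltjesTransform ν w).re :=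
        h.integral_div_sq_le_re_stieltjesTransform hw hw0 hwR
    _ ≤ (stieltjesTransform ν w + w).re := by simpa using hw
    _ ≤ ‖stieltjesTransform ν w + w‖ := Complex.re_le_norm _

lemma stieltjesTransform_add_ne_zero (h : HasStieltjesTransform ν) (hν : ν (Ioi 0) ≠ 0)
    (hw : 0 ≤ w.re) (hw0 : w ≠ 0) : stieltjesTransform ν w + w ≠ 0 :=
  norm_pos_iff.1 ((h.integral_div_sq_pos hν (norm_pos_iff.2 hw0)).trans_le
    (h.integral_div_sq_le_norm_stieltjesTransform_add hw hw0 le_rfl))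

lemma differentiableAt_relaxationTransform (h : HasStieltjesTransform ν) (hν : ν (Ioi 0) ≠ 0)
    (hw : 0 ≤ w.re) (hw0 : w ≠ 0) : DifferentiableAt ℂ (relaxationTransform ν) w :=
  ((h.differentiableAt_stieltjesTransform hw hw0).add differentiableAt_id).inv
    (h.stieltjesTransform_add_ne_zero hν hw hw0)

lemma differentiableAt_relaxationTransform_sub (h : HasStieltjesTransform ν)
    (hν : ν (Ioi 0) ≠ 0) (hw : 0 ≤ w.re) (hw0 : w ≠ 0) :
    DifferentiableAt ℂ (fun w => relaxationTransform ν w - (w + 1)⁻¹) w :=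
  (h.differentiableAt_relaxationTransform hν hw hw0).sub
    ((differentiableAt_id.add_const 1).inv
      (norm_pos_iff.1 (one_pos.trans_le (one_le_norm_add_one hw))))

lemma norm_relaxationTransform_sub_le_of_norm_le (h : HasStieltjesTransform ν)
    (hν : ν (Ioi 0) ≠ 0) (hw : 0 ≤ w.re) (hw0 : w ≠ 0) {R : ℝ} (hwR : ‖w‖ ≤ R) :
    ‖relaxationTransform ν w - (w + 1)⁻¹‖ ≤ (∫ x, x / (R + x) ^ 2 ∂ν)⁻¹ + 1 := by
  have hc := h.integral_div_sq_pos hν ((norm_pos_iff.2 hw0).trans_le hwR)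
  calc ‖relaxationTransform ν w - (w + 1)⁻¹‖
      ≤ ‖relaxationTransform ν w‖ + ‖(w + 1)⁻¹‖ := norm_sub_le _ _
    _ ≤ (∫ x, x / (R + x) ^ 2 ∂ν)⁻¹ + 1 := by
        rw [relaxationTransform, norm_inv, norm_inv]
        gcongr
        · exact h.integral_div_sq_le_norm_stieltjesTransform_add hw hw0 hwR
        · exact inv_le_one_of_one_le₀ (one_le_norm_add_one hw)

lemma exists_norm_relaxationTransform_sub_le (h : HasStieltjesTransform ν)
    (hν : ν (Ioi 0) ≠ 0) : ∃ C, ∀ w : ℂ, 0 < w.re →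
      ‖relaxationTransform ν w - (w + 1)⁻¹‖ ≤ C * (1 + ‖w‖ ^ 2)⁻¹ := by
  set M := 2 * ∫ x, (1 + x)⁻¹ ∂ν
  set R := max 1 (2 * M)
  set c := ∫ x, x / (R + x) ^ 2 ∂ν
  refine ⟨max ((c⁻¹ + 1) * (1 + R ^ 2)) (4 * (1 + M)), fun w hw => ?_⟩
  have hw0 : w ≠ 0 := fun h0 => by simp [h0] at hw
  rw [← div_eq_mul_inv, le_div_iff₀ (by positivity), le_max_iff]
  rcases le_total ‖w‖ R with hwR | hRw
  · left
    have hc : 0 < c := h.integral_div_sq_pos hν (by positivity)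
    gcongr
    exact h.norm_relaxationTransform_sub_le_of_norm_le hν hw.le hw0 hwR
  · right
    have hw1 : 1 ≤ ‖w‖ := (le_max_left _ _).trans hRw
    have hS := h.norm_stieltjesTransform_le hw.le one_pos hw1
    have hM : 0 ≤ M := (norm_nonneg _).trans hS
    calc ‖relaxationTransform ν w - (w + 1)⁻¹‖ * (1 + ‖w‖ ^ 2)
        ≤ 2 * (1 + M) / ‖w‖ ^ 2 * (‖w‖ ^ 2 + ‖w‖ ^ 2) := by
          gcongr
          · exact norm_relaxationTransform_sub_le_of_le_norm hw.le hw0 hS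
              ((le_max_right _ _).trans hRw)
          · exact one_le_pow₀ hw1
      _ = 4 * (1 + M) := by field_simp; ring

lemma integrable_and_integral_relaxationTransform_sub (h : HasStieltjesTransform ν)
    (hν : ν (Ioi 0) ≠ 0) :
    Integrable (fun t : ℝ =>
        relaxationTransform ν (t * Complex.I) - (t * Complex.I + 1)⁻¹) ∧
      ∫ t : ℝ, (relaxationTransform ν (t * Complex.I) - (t * Complex.I + 1)⁻¹) = 0 := by
  obtain ⟨C, hC⟩ := h.exists_norm_relaxationTransform_sub_le hν
  refine integrable_and_integral_eq_zero_of_tendsto_add_mul_I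
    (fun w (hw : 0 < w.re) => (h.differentiableAt_relaxationTransform_sub hν hw.le
      fun h0 => by simp [h0] at hw).differentiableWithinAt) hC ?_
  filter_upwards [Measure.ae_ne volume 0] with t ht
  have hcont := (h.differentiableAt_relaxationTransform_sub hν (w := t * Complex.I) (by simp)
    (by simpa using ht)).continuousAt
  have hline : Tendsto (fun ε : ℝ => (ε + t * Complex.I : ℂ)) (𝓝[>] 0) (𝓝 (t * Complex.I)) :=
    tendsto_nhdsWithin_of_tendsto_nhds
      (Continuous.tendsto' (by fun_prop) 0 _ (by simp))
  exact hcont.tendsto.comp hline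

theorem integrable_and_integral_re_relaxationTransform (h : HasStieltjesTransform ν)
    (hν : ν (Ioi 0) ≠ 0) :
    Integrable (fun t : ℝ => (relaxationTransform ν (t * Complex.I)).re) ∧
      ∫ t : ℝ, (relaxationTransform ν (t * Complex.I)).re = Real.pi := by
  obtain ⟨hint, hzero⟩ := h.integrable_and_integral_relaxationTransform_sub hν
  have hint_re : Integrable fun t : ℝ =>
      (relaxationTransform ν (t * Complex.I) - (t * Complex.I + 1)⁻¹).re := hint.re
  have hzero_re :
      ∫ t : ℝ, (relaxationTransform ν (t * Complex.I) - (t * Complex.I + 1)⁻¹).re = 0 := by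
    simpa [hzero] using integral_re hint
  have hsplit : (fun t : ℝ => (relaxationTransform ν (t * Complex.I)).re) = fun t : ℝ =>
      (relaxationTransform ν (t * Complex.I) - (t * Complex.I + 1)⁻¹).re + (1 + t ^ 2)⁻¹ := by
    ext t
    simp [Complex.inv_re, Complex.normSq_apply, sq]
  rw [hsplit]
  refine ⟨hint_re.add integrable_inv_one_add_sq, ?_⟩
  rw [integral_add hint_re integrable_inv_one_add_sq, hzero_re, integral_univ_inv_one_add_sq,
    zero_add]

lemma re_relaxationTransform_mul_I (h : HasStieltjesTransform ν) {t : ℝ} (ht : t ≠ 0) :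
    (relaxationTransform ν (t * Complex.I)).re = (∫ x, x / (x ^ 2 + t ^ 2) ∂ν) /
      ((∫ x, x / (x ^ 2 + t ^ 2) ∂ν) ^ 2 + (t - ∫ x, t / (x ^ 2 + t ^ 2) ∂ν) ^ 2) := by
  rw [relaxationTransform, h.stieltjesTransform_mul_I ht, Complex.inv_re, Complex.normSq_apply]
  simp only [Complex.add_re, Complex.add_im, Complex.re_ofReal_mul, Complex.im_ofReal_mul,
    Complex.I_re, Complex.I_im, mul_zero, mul_one, add_zero]
  congr 1
  ring

end HasStieltjesTransform

end RelaxationTransform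

lemma integrableOn_inv_one_add_Ici (μ : Measure ℝ) [IsFiniteMeasure μ] :
    IntegrableOn (fun x => (1 + x)⁻¹) (Ici 0) μ := by
  refine Integrable.of_bound
    (by fun_prop : Measurable fun x : ℝ => (1 + x)⁻¹).aestronglyMeasurable 1 ?_
  filter_upwards [ae_restrict_mem measurableSet_Ici] with x (hx : 0 ≤ x)
  rw [norm_inv, Real.norm_of_nonneg (by positivity)]
  exact inv_le_one_of_one_le₀ (by linarith)

theorem spectral_density_integral_general
    (μ : Measure ℝ) (hint : IntegrableOn (fun x => (1 + x)⁻¹) (Ici 0) μ) (hμ : μ (Ioi 0) ≠ 0)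
    (α lam : ℝ) (hα : 0 < α) (Kcos Ksin ρ : ℝ → ℝ)
    (hKcos : ∀ ω : ℝ, ω ≠ 0 → Kcos ω = ∫ x in Ici 0, x / (x ^ 2 + ω ^ 2) ∂μ)
    (hKsin : ∀ ω : ℝ, ω ≠ 0 → Ksin ω = ∫ x in Ici 0, ω / (x ^ 2 + ω ^ 2) ∂μ)
    (hρ : ∀ ω : ℝ, ω ≠ 0 →
      ρ ω = (1 / Real.pi) * (lam ^ 2 * Kcos ω)
        / (α ^ 2 * Kcos ω ^ 2 + (ω - α * Ksin ω) ^ 2)) :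
    Integrable ρ ∧ ∫ ω : ℝ, ρ ω = lam ^ 2 / α := by
  set ν := ENNReal.ofReal α • μ.restrict (Ici 0) with hν
  have hS : HasStieltjesTransform ν :=
    .smul ⟨ae_restrict_mem measurableSet_Ici, hint⟩ ENNReal.ofReal_ne_top
  have hν0 : ν (Ioi 0) ≠ 0 := by
    simpa [hν, hα, inter_eq_left.2 Ioi_subset_Ici_self] using hμ
  have hαν (g : ℝ → ℝ) : ∫ x, g x ∂ν = α * ∫ x in Ici 0, g x ∂μ := by
    simp [hν, integral_smul_measure, hα.le]
  obtain ⟨hF, hFπ⟩ := hS.integrable_and_integral_re_relaxationTransform hν0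
  have hρF : (fun ω : ℝ => lam ^ 2 / (α * Real.pi) *
      (relaxationTransform ν (ω * Complex.I)).re) =ᵐ[volume] ρ := by
    filter_upwards [Measure.ae_ne volume 0] with ω hω
    rw [hS.re_relaxationTransform_mul_I hω, hαν, hαν, hρ ω hω, hKcos ω hω, hKsin ω hω]
    field_simp
  refine ⟨(hF.const_mul _).congr hρF, ?_⟩
  rw [← integral_congr_ae hρF, integral_const_mul, hFπ]
  field_simp

/-- The spectral density
`ρ(ω) = (1/π) λ² K_cos(ω) / (α² K_cos(ω)² + (ω − α K_sin(ω))²)`, where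
`K_cos(ω) = ∫₀^∞ x/(x²+ω²) dμ(x)` and `K_sin(ω) = ∫₀^∞ ω/(x²+ω²) dμ(x)` for a
nonzero finite positive measure `μ` on `[0,∞)` with `μ({0}) = 0`, is integrable on
`ℝ` and `∫_ℝ ρ(ω) dω = λ²/α`. -/
theorem spectral_density_integral
    (μ : Measure ℝ) [IsFiniteMeasure μ] (hμ : μ (Ici 0) ≠ 0) (hzero : μ {0} = 0)
    (α lam : ℝ) (hα : 0 < α) (hlam : 0 < lam)
    (Kcos Ksin ρ : ℝ → ℝ)
    (hKcos : ∀ ω : ℝ, ω ≠ 0 → Kcos ω = ∫ x in Ici 0, x / (x ^ 2 + ω ^ 2) ∂μ)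
    (hKsin : ∀ ω : ℝ, ω ≠ 0 → Ksin ω = ∫ x in Ici 0, ω / (x ^ 2 + ω ^ 2) ∂μ)
    (hρ : ∀ ω : ℝ, ω ≠ 0 →
      ρ ω = (1 / Real.pi) * (lam ^ 2 * Kcos ω)
        / (α ^ 2 * Kcos ω ^ 2 + (ω - α * Ksin ω) ^ 2)) :
    Integrable ρ ∧ ∫ ω : ℝ, ρ ω = lam ^ 2 / α := by
  have hpos : μ (Ioi 0) ≠ 0 := by rwa [measure_congr (Ioi_ae_eq_Ici' hzero)]
  exact spectral_density_integral_general μ (integrableOn_inv_one_add_Ici μ) hpos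
    α lam hα Kcos Ksin ρ hKcos hKsin hρ
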